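/- arXiv:1002.0110 — 6 statements merged into one kernel-verified Lean document; each statement's English description precedes it below -/
import Mathlib

section
/- Suppose S = N. If x̂ : ℝ^N → ℝ^N is a measurable estimator that is unbiased (here X_N = ℝ^N, so ∫ x̂(y)_i dP_x(y) = x_i for all x ∈ ℝ^N and all i) and has bounded MSE (there exists C < ∞ with ε(x; x̂) ≤ C for all x ∈ ℝ^N), then x̂ coincides with the least-squares estimator x̂_LS(y) = y almost everywhere with respect to Lebesgue measure on ℝ^N (equivalently, P_x-almost everywhere for every x). -/
open MeasureTheory ProbabilityTheory Filter
open scoped ENNReal Classical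

/-- The product Gaussian measure `P_x` on `ℝ^N` with mean `x` and variance `σ²` per coordinate. -/
noncomputable def gaussP (N : ℕ) (σ : ℝ) (x : Fin N → ℝ) : Measure (Fin N → ℝ) :=
  MeasureTheory.Measure.pi fun i => gaussianReal (x i) (Real.toNNReal (σ ^ 2))

/-- The support of `x`: indices with nonzero entries. Its cardinality is `‖x‖₀`. -/
noncomputable def supp {N : ℕ} (x : Fin N → ℝ) : Finset (Fin N) :=
  Finset.univ.filter fun i => x i ≠ 0

/-- The sparse parameter set `X_S = {x : ‖x‖₀ ≤ S}`. -/
def sparseSet (N S : ℕ) : Set (Fin N → ℝ) := {x | (supp x).card ≤ S}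

/-- An estimator is unbiased if each component is `P_x`-integrable with mean `x i`
for every `x ∈ X_S`. -/
def Unbiased (N S : ℕ) (σ : ℝ) (est : (Fin N → ℝ) → Fin N → ℝ) : Prop :=
  ∀ x ∈ sparseSet N S, ∀ i,
    Integrable (fun y => est y i) (gaussP N σ x) ∧
    (∫ y, est y i ∂gaussP N σ x) = x i

/-- The MSE `ε(x; x̂) = ∫ ‖x̂(y) − x‖₂² dP_x(y)`, as an extended real. -/
noncomputable def MSE (N : ℕ) (σ : ℝ) (est : (Fin N → ℝ) → Fin N → ℝ)
    (x : Fin N → ℝ) : ℝ≥0∞ :=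
  ∫⁻ y, ENNReal.ofReal (∑ i, (est y i - x i) ^ 2) ∂gaussP N σ x

lemma ae_zero_of_exp (N : ℕ) (h : (Fin N → ℝ) → ℝ) (hm : Measurable h)
    (hi : ∀ L : StrongDual ℝ (Fin N → ℝ), Integrable (fun y => h y * Real.exp (L y)) volume)
    (h0 : ∀ L : StrongDual ℝ (Fin N → ℝ), ∫ y, h y * Real.exp (L y) = 0) :
    h =ᵐ[volume] 0 := by
  have hint : Integrable h volume := by simpa using hi 0
  have key : ∀ k : (Fin N → ℝ) → ℝ, Measurable k → Integrable k volume →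
      ∀ g : (Fin N → ℝ) → ℝ, 
      ∫ y, g y ∂(volume.withDensity (fun y => ENNReal.ofReal (k y))) = ∫ y, max (k y) 0 * g y := by
    intro k hk _ g
    rw [integral_withDensity_eq_integral_toReal_smul (by fun_prop) (by simp)]
    simp [ENNReal.toReal_ofReal']
  have keyi : ∀ k : (Fin N → ℝ) → ℝ, Measurable k → 
      (∀ L : StrongDual ℝ (Fin N → ℝ), Integrable (fun y => k y * Real.exp (L y)) volume) →
      ∀ L : StrongDual ℝ (Fin N → ℝ), 
      Integrable (fun y => max (k y) 0 * Real.exp (L y)) volume := by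
    intro k hk hki L
    refine (hki L).mono (by fun_prop) (Eventually.of_forall fun y => ?_)
    rw [norm_mul, norm_mul]
    gcongr
    simp only [Real.norm_eq_abs]
    rcases le_total (k y) 0 with h | h <;> simp [h]
  have keyw : ∀ k : (Fin N → ℝ) → ℝ, Measurable k → 
      (∀ L : StrongDual ℝ (Fin N → ℝ), Integrable (fun y => k y * Real.exp (L y)) volume) →
      ∀ L : StrongDual ℝ (Fin N → ℝ), 
      Integrable (fun y => Real.exp (L y))
        (volume.withDensity (fun y => ENNReal.ofReal (k y))) := by
    intro k hk hki L
    rw [integrable_withDensity_iff (by fun_prop) (by simp)]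
    simpa [ENNReal.toReal_ofReal', mul_comm] using keyi k hk hki L
  have hi' : ∀ L : StrongDual ℝ (Fin N → ℝ),
      Integrable (fun y => (-h y) * Real.exp (L y)) volume := fun L => by
    simpa using (hi L).neg
  set μ := (volume : Measure (Fin N → ℝ)).withDensity (fun y => ENNReal.ofReal (h y)) with hμ
  set ν := (volume : Measure (Fin N → ℝ)).withDensity (fun y => ENNReal.ofReal (-h y)) with hν
  have : IsFiniteMeasure μ := isFiniteMeasure_withDensity_ofReal hint.2
  have : IsFiniteMeasure ν := isFiniteMeasure_withDensity_ofReal hint.neg.2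
  have hexp : ∀ L : StrongDual ℝ (Fin N → ℝ),
      ∫ y, Real.exp (L y) ∂μ = ∫ y, Real.exp (L y) ∂ν := by
    intro L
    rw [hμ, hν, key h hm hint, key (fun y => -h y) hm.neg hint.neg, ← sub_eq_zero,
      ← integral_sub (keyi h hm hi L) (keyi (fun y => -h y) hm.neg hi' L)]
    refine Eq.trans ?_ (h0 L)
    congr 1
    ext y
    rw [← sub_mul]
    congr 1
    rcases le_total (h y) 0 with h | h <;> simp [h]
  have hmgf : ∀ L : StrongDual ℝ (Fin N → ℝ), mgf L μ = mgf L ν := by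
    intro L
    ext t
    simpa [mgf] using hexp (t • L)
  have hzero : μ = 0 ↔ ν = 0 := by
    have := hexp 0
    simp only [zero_apply, Real.exp_zero, integral_const, smul_eq_mul,
      mul_one] at this
    rw [← Measure.measure_univ_eq_zero, ← Measure.measure_univ_eq_zero (μ := ν),
      ← measureReal_eq_zero_iff, ← measureReal_eq_zero_iff, this]
  have hμν : μ = ν := by
    apply Measure.ext_of_charFunDual
    ext L
    have hs : integrableExpSet L μ = Set.univ := by
      ext t
      simpa [integrableExpSet] using keyw h hm hi (t • L)
    have := eqOn_complexMGF_of_mgf' (hmgf L) hzero (x := Complex.I) (by simp [hs])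
    simpa [complexMGF, charFunDual_apply, mul_comm] using this
  rw [hμ, hν, withDensity_eq_iff_of_sigmaFinite (by fun_prop) (by fun_prop)] at hμν
  filter_upwards [hμν] with y hy
  have := congrArg ENNReal.toReal hy
  simp only [ENNReal.toReal_ofReal'] at this
  rcases le_total (h y) 0 with h | h
  · simp [h] at this; simpa using this
  · simp [h] at this; simpa using this

lemma gaussP_eq (N : ℕ) (σ : ℝ) (hσ : 0 < σ) (x : Fin N → ℝ) :
    gaussP N σ x = volume.withDensity
      (fun y => ENNReal.ofReal (∏ i, gaussianPDFReal (x i) (Real.toNNReal (σ ^ 2)) (y i))) := by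
  have hv : Real.toNNReal (σ ^ 2) ≠ 0 := by
    simp only [ne_eq, Real.toNNReal_eq_zero, not_le]; positivity
  refine Measure.pi_eq fun s hs => ?_
  rw [withDensity_apply _ (MeasurableSet.univ_pi hs), volume_pi, Measure.restrict_pi_pi,
    ← ofReal_integral_eq_lintegral_ofReal, integral_fintype_prod_eq_prod,
    ENNReal.ofReal_prod_of_nonneg]
  · refine Finset.prod_congr rfl fun i _ => ?_
    rw [gaussianReal_apply_eq_integral _ hv]
  · intro i _
    exact integral_nonneg fun y => gaussianPDFReal_nonneg _ _ _
  · exact Integrable.fintype_prod fun i => (integrable_gaussianPDFReal _ _).restrict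
  · exact Eventually.of_forall fun y => Finset.prod_nonneg fun i _ => gaussianPDFReal_nonneg _ _ _

lemma pdf_shift (v : NNReal) (m y : ℝ) :
    gaussianPDFReal m v y = gaussianPDFReal 0 v y * Real.exp (m * y / v) *
      Real.exp (-m ^ 2 / (2 * v)) := by
  simp only [gaussianPDFReal, mul_assoc, ← Real.exp_add]
  congr 2
  by_cases hv : (v : ℝ) = 0
  · simp [hv]
  field_simp
  ring

/-- For `S = N`, any measurable unbiased estimator with bounded MSE coincides with the
least-squares estimator `x̂_LS(y) = y` Lebesgue-almost everywhere. -/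
theorem stmt_0 (N : ℕ) (hN : 1 ≤ N) (σ : ℝ) (hσ : 0 < σ)
    (est : (Fin N → ℝ) → Fin N → ℝ) (hmeas : Measurable est)
    (hunb : Unbiased N N σ est)
    (hbdd : ∃ C : ℝ, ∀ x : Fin N → ℝ, MSE N σ est x ≤ ENNReal.ofReal C) :
    ∀ᵐ y ∂(MeasureTheory.volume : Measure (Fin N → ℝ)), est y = y := by
  have hv : Real.toNNReal (σ ^ 2) ≠ 0 := by
    simp only [ne_eq, Real.toNNReal_eq_zero, not_le]; positivity
  set v := Real.toNNReal (σ ^ 2) with hvdef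
  have hv' : (v : ℝ) ≠ 0 := by simpa using hv
  suffices H : ∀ i, ∀ᵐ y ∂(volume : Measure (Fin N → ℝ)), est y i = y i by
    filter_upwards [ae_all_iff.2 H] with y hy
    exact funext hy
  intro i
  have hesti : Measurable fun y => est y i := (measurable_pi_apply i).comp hmeas
  set G : (Fin N → ℝ) → (Fin N → ℝ) → ℝ := fun x y => ∏ j, gaussianPDFReal (x j) v (y j) with hG
  have hGm : ∀ x, Measurable (G x) := fun x => by
    simp only [hG]
    exact Finset.measurable_prod _ fun j _ =>
      (measurable_gaussianPDFReal _ _).comp (measurable_pi_apply j)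
  have hGpos : ∀ x y, 0 < G x y := fun x y =>
    Finset.prod_pos fun j _ => gaussianPDFReal_pos _ _ _ hv
  have hmean : ∀ x, Integrable (fun y => est y i - y i) (gaussP N σ x) ∧
      ∫ y, (est y i - y i) ∂gaussP N σ x = 0 := by
    intro x
    obtain ⟨h1, h2⟩ := hunb x (by
      simpa [sparseSet] using Finset.card_le_univ (supp x)) i
    have mp : MeasurePreserving (Function.eval i) (gaussP N σ x) (gaussianReal (x i) v) :=
      measurePreserving_eval (fun i => gaussianReal (x i) v) i
    have hid : Integrable (fun y : ℝ => y) (gaussianReal (x i) v) :=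
      (memLp_id_gaussianReal 1).integrable (by simp)
    have h3 : Integrable (fun y : Fin N → ℝ => y i) (gaussP N σ x) :=
      mp.integrable_comp_of_integrable hid
    refine ⟨h1.sub h3, ?_⟩
    rw [integral_sub h1 h3, h2]
    have : ∫ y : Fin N → ℝ, y i ∂gaussP N σ x = ∫ z, z ∂gaussianReal (x i) v := by
      rw [← mp.map_eq, integral_map mp.measurable.aemeasurable (by fun_prop)]
    rw [this, integral_id_gaussianReal, sub_self]
  have hL : ∀ L : StrongDual ℝ (Fin N → ℝ), ∃ x : Fin N → ℝ, ∃ c : ℝ, c ≠ 0 ∧ 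
      ∀ y, G x y * c = G 0 y * Real.exp (L y) := by
    intro L
    refine ⟨fun j => v * L (Pi.single j 1),
      (∏ j, Real.exp (-(v * L (Pi.single j 1)) ^ 2 / (2 * v)))⁻¹,
      inv_ne_zero (Finset.prod_pos fun j _ => Real.exp_pos _).ne', fun y => ?_⟩
    have hLy : L y = ∑ j, y j * L (Pi.single j 1) := by
      conv_lhs => rw [pi_eq_sum_univ' y]
      simp [map_sum]
    simp only [hG]
    simp_rw [pdf_shift v (_ * _)]
    rw [Finset.prod_mul_distrib, mul_assoc, mul_inv_cancel₀
      (Finset.prod_pos fun j _ => Real.exp_pos _).ne', mul_one, Finset.prod_mul_distrib,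
      ← Real.exp_sum, hLy]
    congr 2
    refine Finset.sum_congr rfl fun j _ => ?_
    field_simp
  have main := ae_zero_of_exp N (fun y => (est y i - y i) * G 0 y)
    ((hesti.sub (measurable_pi_apply i)).mul (hGm 0)) ?_ ?_
  · filter_upwards [main] with y hy
    have := (mul_eq_zero.1 hy).resolve_right (hGpos 0 y).ne'
    linarith
  · intro L
    obtain ⟨x, c, hc, hx⟩ := hL L
    have h1 := (hmean x).1
    rw [gaussP_eq N σ hσ x, integrable_withDensity_iff (hGm x).ennreal_ofReal (by simp)] at h1
    refine (h1.mul_const c).congr (Eventually.of_forall fun y => ?_)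
    have : (∏ j, gaussianPDFReal (x j) v (y j)) = G x y := rfl
    simp only [← hvdef, this, ENNReal.toReal_ofReal (hGpos x y).le]
    rw [mul_assoc, mul_assoc, hx]
  · intro L
    obtain ⟨x, c, hc, hx⟩ := hL L
    have h1 := (hmean x).2
    rw [gaussP_eq N σ hσ x, integral_withDensity_eq_integral_toReal_smul
      (hGm x).ennreal_ofReal (by simp)] at h1
    rw [← zero_mul c, ← h1, ← integral_mul_const]
    congr 1
    ext y
    have : (∏ j, gaussianPDFReal (x j) v (y j)) = G x y := rfl
    simp only [← hvdef, this, ENNReal.toReal_ofReal (hGpos x y).le, smul_eq_mul]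
    rw [mul_assoc, ← hx]
    ring
end

section
/- Suppose 1 ≤ S < N. Then there exist infinitely many unbiased estimators for the sparse signal-in-noise model: there is a sequence x̂⁽ⁿ⁾ (n ∈ ℕ) of measurable estimators, each unbiased at every x ∈ X_S, such that for all m ≠ n the set {y ∈ ℝ^N : x̂⁽ᵐ⁾(y) ≠ x̂⁽ⁿ⁾(y)} has positive Lebesgue measure (so the estimators are pairwise distinct even up to modifications on null sets). -/
open MeasureTheory ProbabilityTheory Filter
open scoped ENNReal Classical

/-- For `S < N` there are infinitely many unbiased estimators: a sequence of measurable
unbiased estimators that pairwise differ on a set of positive Lebesgue measure. -/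
theorem stmt_1 (N S : ℕ) (σ : ℝ) (hσ : 0 < σ) (hS : 1 ≤ S) (hSN : S < N) :
    ∃ est : ℕ → (Fin N → ℝ) → Fin N → ℝ,
      (∀ n, Measurable (est n) ∧ Unbiased N S σ (est n)) ∧
      ∀ m n, m ≠ n →
        0 < MeasureTheory.volume {y : Fin N → ℝ | est m y ≠ est n y} := by
  have hI : ∀ (x : Fin N → ℝ) (i : Fin N),
      Integrable (fun t : ℝ => t) (gaussianReal (x i) (Real.toNNReal (σ ^ 2))) := fun x i =>
    (memLp_id_gaussianReal (μ := x i) (v := Real.toNNReal (σ ^ 2)) 1).integrable (by norm_num)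
  refine ⟨fun n y i => y i + n * ∏ j, y j, fun n => ⟨by fun_prop, ?_⟩, ?_⟩
  · intro x hx i
    have h1 : Integrable (fun y : Fin N → ℝ => y i) (gaussP N σ x) :=
      integrable_comp_eval (μ := fun i => gaussianReal (x i) (Real.toNNReal (σ ^ 2))) (hI x i)
    have h2 : Integrable (fun y : Fin N → ℝ => ∏ j, y j) (gaussP N σ x) :=
      Integrable.fintype_prod (f := fun _ t => t) (fun j => hI x j)
    have e1 : ∫ y, y i ∂gaussP N σ x = x i := by
      have := integral_comp_eval (μ := fun i => gaussianReal (x i) (Real.toNNReal (σ ^ 2)))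
        (i := i) (f := fun t : ℝ => t) (hI x i).aestronglyMeasurable
      rw [integral_id_gaussianReal] at this
      exact this
    have e2 : ∫ y, ∏ j, y j ∂gaussP N σ x = 0 := by
      have := integral_fintype_prod_eq_prod (fun (_ : Fin N) (t : ℝ) => t)
        (μ := fun i => gaussianReal (x i) (Real.toNNReal (σ ^ 2)))
      simp only [integral_id_gaussianReal] at this
      refine Eq.trans this ?_
      by_contra hne
      rw [← ne_eq, Finset.prod_ne_zero_iff] at hne
      have hx' : (supp x).card ≤ S := hx
      rw [supp, Finset.filter_true_of_mem hne] at hx'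
      simp at hx'
      omega
    refine ⟨h1.add (h2.const_mul _), ?_⟩
    rw [integral_add h1 (h2.const_mul _), integral_const_mul, e1, e2]
    simp
  · intro m n hmn
    have ho : IsOpen (Set.pi Set.univ fun _ : Fin N => Set.Ioi (0 : ℝ)) :=
      isOpen_set_pi Set.finite_univ fun _ _ => isOpen_Ioi
    refine lt_of_lt_of_le (ho.measure_pos volume ⟨fun _ => 1, by simp⟩) (measure_mono ?_)
    intro y hy h
    have hp : 0 < ∏ j, y j := Finset.prod_pos fun j _ => hy j trivial
    have h0 := congrFun h ⟨0, by omega⟩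
    simp only [add_right_inj] at h0
    exact hmn (by exact_mod_cast mul_right_cancel₀ hp.ne' h0)
end

section
/- Suppose 1 ≤ S < N. Then there does not exist a uniformly minimum variance unbiased (UMVU) estimator for the sparse signal-in-noise model: there is no measurable unbiased estimator x̂* such that for every measurable unbiased estimator x̂ and every x ∈ X_S, ε(x; x̂*) ≤ ε(x; x̂). -/
open MeasureTheory ProbabilityTheory Filter
open scoped ENNReal Classical

lemma gauss_tilt1 (m a : ℝ) (v : NNReal) (hv : v ≠ 0) :
    gaussianReal (m + v * a) v = (gaussianReal m v).withDensity
      (fun y => ENNReal.ofReal (Real.exp (a * (y - m) - v * a ^ 2 / 2))) := by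
  rw [gaussianReal_of_var_ne_zero _ hv, gaussianReal_of_var_ne_zero _ hv,
    ← withDensity_mul _ (measurable_gaussianPDF _ _) (by fun_prop)]
  congr 1
  ext y
  have hv' : (v : ℝ) ≠ 0 := by exact_mod_cast hv
  simp only [Pi.mul_apply, gaussianPDF, gaussianPDFReal]
  rw [← ENNReal.ofReal_mul (by positivity), mul_assoc (√(2 * Real.pi * v))⁻¹, ← Real.exp_add]
  congr 3
  field_simp
  ring

noncomputable def psi (N : ℕ) (σ : ℝ) (x a y : Fin N → ℝ) : ℝ :=
  ∏ i, Real.exp (a i * (y i - x i) - σ ^ 2 * a i ^ 2 / 2)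

lemma psi_meas (N : ℕ) (σ : ℝ) (x a : Fin N → ℝ) : Measurable (psi N σ x a) := by
  unfold psi; fun_prop

lemma psi_pos (N : ℕ) (σ : ℝ) (x a y : Fin N → ℝ) : 0 < psi N σ x a y := by
  unfold psi; positivity

instance (N : ℕ) (σ : ℝ) (x : Fin N → ℝ) : IsProbabilityMeasure (gaussP N σ x) := by
  unfold gaussP; infer_instance

lemma gauss_tilt (N : ℕ) (σ : ℝ) (hσ : 0 < σ) (x a : Fin N → ℝ) :
    gaussP N σ (fun i => x i + σ ^ 2 * a i) = (gaussP N σ x).withDensity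
      (fun y => ENNReal.ofReal (psi N σ x a y)) := by
  have hv : Real.toNNReal (σ ^ 2) ≠ 0 := by
    have : 0 < σ ^ 2 := by positivity
    exact (Real.toNNReal_pos.2 this).ne'
  have hvc : ((Real.toNNReal (σ ^ 2) : NNReal) : ℝ) = σ ^ 2 := Real.coe_toNNReal _ (by positivity)
  have hint : ∀ i, Integrable (fun y : ℝ => Real.exp (a i * (y - x i) - σ ^ 2 * a i ^ 2 / 2))
      (gaussianReal (x i) (Real.toNNReal (σ ^ 2))) := by
    intro i
    have := (integrable_exp_mul_gaussianReal (μ := x i) (v := Real.toNNReal (σ ^ 2)) (a i)).mul_const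
      (Real.exp (- a i * x i - σ ^ 2 * a i ^ 2 / 2))
    refine this.congr (Eventually.of_forall fun y => ?_)
    simp only
    rw [← Real.exp_add]; congr 1; ring
  unfold gaussP
  refine Measure.pi_eq fun s hs => ?_
  rw [withDensity_apply _ (MeasurableSet.univ_pi hs), Measure.restrict_pi_pi]
  rw [← ofReal_integral_eq_lintegral_ofReal]
  · unfold psi
    rw [integral_fintype_prod_eq_prod (𝕜 := ℝ)
      (fun i (y : ℝ) => Real.exp (a i * (y - x i) - σ ^ 2 * a i ^ 2 / 2)),
      ENNReal.ofReal_prod_of_nonneg (fun i _ => integral_nonneg fun y => (Real.exp_pos _).le)]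
    refine Finset.prod_congr rfl fun i _ => ?_
    rw [ofReal_integral_eq_lintegral_ofReal (hint i).restrict
      (Eventually.of_forall fun y => (Real.exp_pos _).le)]
    have := gauss_tilt1 (x i) (a i) _ hv
    rw [hvc] at this
    rw [this, withDensity_apply _ (hs i)]
  · unfold psi
    exact Integrable.fintype_prod (𝕜 := ℝ)
      (f := fun i (y : ℝ) => Real.exp (a i * (y - x i) - σ ^ 2 * a i ^ 2 / 2))
      fun i => (hint i).restrict
  · exact Eventually.of_forall fun y => (psi_pos ..).le

lemma integral_tilt (N : ℕ) (σ : ℝ) (hσ : 0 < σ) (x a : Fin N → ℝ) (f : (Fin N → ℝ) → ℝ) :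
    ∫ y, f y ∂gaussP N σ (fun i => x i + σ ^ 2 * a i)
      = ∫ y, psi N σ x a y * f y ∂gaussP N σ x := by
  rw [gauss_tilt N σ hσ]
  rw [integral_withDensity_eq_integral_toReal_smul (psi_meas N σ x a).ennreal_ofReal
    (Eventually.of_forall fun y => ENNReal.ofReal_lt_top)]
  refine integral_congr_ae (Eventually.of_forall fun y => ?_)
  simp [ENNReal.toReal_ofReal (psi_pos ..).le]

lemma psi_integrable (N : ℕ) (σ : ℝ) (hσ : 0 < σ) (x a : Fin N → ℝ) :
    Integrable (psi N σ x a) (gaussP N σ x) := by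
  refine ⟨(psi_meas N σ x a).aestronglyMeasurable, ?_⟩
  rw [hasFiniteIntegral_iff_ofReal (Eventually.of_forall fun y => (psi_pos ..).le)]
  have := gauss_tilt N σ hσ x a
  have h2 := congrArg (fun μ => μ Set.univ) this
  simp only [measure_univ, withDensity_apply _ MeasurableSet.univ, Measure.restrict_univ] at h2
  rw [← h2]; simp

/-- the likelihood ratio relative to the origin -/
noncomputable def LL (N : ℕ) (σ : ℝ) (a y : Fin N → ℝ) : ℝ := psi N σ 0 a y

lemma LL_eq (N : ℕ) (σ : ℝ) (x a y : Fin N → ℝ) :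
    LL N σ a y = Real.exp (∑ i, a i * x i) * psi N σ x a y := by
  unfold LL psi
  rw [Real.exp_sum, ← Finset.prod_mul_distrib]
  refine Finset.prod_congr rfl fun i _ => ?_
  rw [← Real.exp_add]; congr 1; simp; ring

lemma LL_meas (N : ℕ) (σ : ℝ) (a : Fin N → ℝ) : Measurable (LL N σ a) := psi_meas N σ 0 a

lemma LL_integrable (N : ℕ) (σ : ℝ) (hσ : 0 < σ) (x a : Fin N → ℝ) :
    Integrable (LL N σ a) (gaussP N σ x) := by
  refine ((psi_integrable N σ hσ x a).const_mul (Real.exp (∑ i, a i * x i))).congr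
    (Eventually.of_forall fun y => (LL_eq N σ x a y).symm)

lemma LL_integral (N : ℕ) (σ : ℝ) (hσ : 0 < σ) (x a : Fin N → ℝ) (f : (Fin N → ℝ) → ℝ) :
    ∫ y, LL N σ a y * f y ∂gaussP N σ x =
      Real.exp (∑ i, a i * x i) * ∫ y, f y ∂gaussP N σ (fun i => x i + σ ^ 2 * a i) := by
  rw [integral_tilt N σ hσ, ← integral_const_mul]
  refine integral_congr_ae (Eventually.of_forall fun y => ?_)
  simp only [LL_eq N σ x a y, mul_assoc]

lemma LL_memLp (N : ℕ) (σ : ℝ) (hσ : 0 < σ) (x a : Fin N → ℝ) :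
    MemLp (LL N σ a) 2 (gaussP N σ x) := by
  rw [memLp_two_iff_integrable_sq (LL_meas N σ a).aestronglyMeasurable]
  refine ((LL_integrable N σ hσ x (fun i => 2 * a i)).const_mul
    (∏ i, Real.exp (σ ^ 2 * a i ^ 2))).congr (Eventually.of_forall fun y => ?_)
  simp only [LL, psi]
  rw [← Finset.prod_mul_distrib, ← Finset.prod_pow]
  refine Finset.prod_congr rfl fun i _ => ?_
  rw [← Real.exp_add, ← Real.exp_nat_mul]; congr 1; simp; ring

/-- the restriction of `a` to `A` -/
noncomputable def rs {N : ℕ} (a : Fin N → ℝ) (A : Finset (Fin N)) : Fin N → ℝ :=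
  fun i => if i ∈ A then a i else 0

noncomputable def UU (N : ℕ) (σ : ℝ) (T : Finset (Fin N)) (a y : Fin N → ℝ) : ℝ :=
  ∑ A ∈ T.powerset, (∏ _i ∈ T \ A, (-1 : ℝ)) * LL N σ (rs a A) y

lemma UU_meas (N : ℕ) (σ : ℝ) (T : Finset (Fin N)) (a : Fin N → ℝ) :
    Measurable (UU N σ T a) := by
  unfold UU
  exact Finset.measurable_sum _ fun A _ => (LL_meas N σ _).const_mul _

lemma UU_memLp (N : ℕ) (σ : ℝ) (hσ : 0 < σ) (T : Finset (Fin N)) (x a : Fin N → ℝ) :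
    MemLp (UU N σ T a) 2 (gaussP N σ x) := by
  unfold UU
  exact memLp_finsetSum _ fun A _ => (LL_memLp N σ hσ x _).const_mul _

lemma exp_rs {N : ℕ} (a x : Fin N → ℝ) (A : Finset (Fin N)) :
    Real.exp (∑ i, rs a A i * x i) = ∏ i ∈ A, Real.exp (a i * x i) := by
  rw [← Real.exp_sum]
  congr 1
  simp [rs, ite_mul, Finset.sum_ite_mem]

lemma UU_integral (N : ℕ) (σ : ℝ) (hσ : 0 < σ) (T : Finset (Fin N)) (x a : Fin N → ℝ)
    (f : (Fin N → ℝ) → ℝ) (hf : MemLp f 2 (gaussP N σ x)) :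
    ∫ y, UU N σ T a y * f y ∂gaussP N σ x =
      ∑ A ∈ T.powerset, (∏ _i ∈ T \ A, (-1 : ℝ)) * ((∏ i ∈ A, Real.exp (a i * x i)) *
        ∫ y, f y ∂gaussP N σ (fun i => x i + σ ^ 2 * rs a A i)) := by
  unfold UU
  simp_rw [Finset.sum_mul]
  rw [integral_finsetSum]
  · refine Finset.sum_congr rfl fun A _ => ?_
    rw [← exp_rs, ← LL_integral N σ hσ, ← integral_const_mul]
    simp only [mul_assoc]
  · intro A _
    simp_rw [mul_assoc]
    exact ((LL_memLp N σ hσ x (rs a A)).integrable_mul hf).const_mul _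

lemma comb1 {N : ℕ} (T : Finset (Fin N)) (f : Fin N → ℝ) :
    ∑ A ∈ T.powerset, (∏ _i ∈ T \ A, (-1 : ℝ)) * (∏ i ∈ A, f i) = ∏ i ∈ T, (f i - 1) := by
  simp_rw [sub_eq_add_neg]
  rw [Finset.prod_add]
  exact Finset.sum_congr rfl fun A _ => mul_comm _ _

lemma comb2 {N : ℕ} (T : Finset (Fin N)) (k : Fin N) (hk : k ∈ T) (f : Fin N → ℝ) :
    ∑ A ∈ T.powerset, (∏ _i ∈ T \ A, (-1 : ℝ)) * ((∏ i ∈ A, f i) * (if k ∈ A then 1 else 0))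
      = f k * ∏ i ∈ T.erase k, (f i - 1) := by
  have h := Finset.prod_add f (fun i => if i = k then 0 else (-1 : ℝ)) T
  rw [← Finset.mul_prod_erase _ _ hk] at h
  have h2 : ∏ i ∈ T.erase k, (f i + if i = k then 0 else (-1 : ℝ))
      = ∏ i ∈ T.erase k, (f i - 1) := by
    refine Finset.prod_congr rfl fun i hi => ?_
    rw [if_neg (Finset.ne_of_mem_erase hi), sub_eq_add_neg]
  rw [h2] at h
  simp only [if_true, add_zero] at h
  rw [h]
  refine Finset.sum_congr rfl fun A _ => ?_
  by_cases hA : k ∈ A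
  · rw [if_pos hA, mul_one, mul_comm]
    congr 1
    refine Finset.prod_congr rfl fun i hi => ?_
    rw [if_neg]
    rintro rfl
    exact (Finset.mem_sdiff.1 hi).2 hA
  · rw [if_neg hA, mul_zero, mul_zero]
    symm
    refine mul_eq_zero_of_right _ (Finset.prod_eq_zero (i := k) ?_ (if_pos rfl))
    exact Finset.mem_sdiff.2 ⟨hk, hA⟩

lemma UU_mean (N S : ℕ) (σ : ℝ) (hσ : 0 < σ) (T : Finset (Fin N)) (hT : S < T.card)
    (x a : Fin N → ℝ) (hx : x ∈ sparseSet N S) :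
    ∫ y, UU N σ T a y ∂gaussP N σ x = 0 := by
  have h := UU_integral N σ hσ T x a (fun _ => 1) (memLp_const 1)
  simp only [mul_one, integral_const, probReal_univ, smul_eq_mul] at h
  rw [h, comb1]
  have : ∃ i ∈ T, x i = 0 := by
    by_contra! hc
    have : T ⊆ supp x := fun i hi => by simp [supp, hc i hi]
    have := Finset.card_le_card this
    have hx' : (supp x).card ≤ S := hx
    omega
  obtain ⟨i, hi, h0⟩ := this
  exact Finset.prod_eq_zero hi (by simp [h0])

lemma id_unbiased (N S : ℕ) (σ : ℝ) : Unbiased N S σ (fun y => y) := by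
  intro x _ i
  unfold gaussP
  have h : Integrable (fun y : ℝ => y) (gaussianReal (x i) (Real.toNNReal (σ ^ 2))) :=
    (memLp_id_gaussianReal 1).integrable (by simp)
  refine ⟨integrable_comp_eval (μ := fun i => gaussianReal (x i) (Real.toNNReal (σ ^ 2)))
    (f := fun y : ℝ => y) h, ?_⟩
  rw [integral_comp_eval (μ := fun i => gaussianReal (x i) (Real.toNNReal (σ ^ 2)))
    (f := fun y : ℝ => y) h.aestronglyMeasurable]
  exact integral_id_gaussianReal

lemma id_MSE (N : ℕ) (σ : ℝ) (x : Fin N → ℝ) : MSE N σ (fun y => y) x < ⊤ := by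
  unfold MSE
  have : Integrable (fun y : Fin N → ℝ => ∑ i, (y i - x i) ^ 2) (gaussP N σ x) := by
    refine integrable_finsetSum _ fun i _ => ?_
    unfold gaussP
    refine integrable_comp_eval (μ := fun i => gaussianReal (x i) (Real.toNNReal (σ ^ 2)))
      (f := fun y : ℝ => (y - x i) ^ 2) ?_
    have := (memLp_id_gaussianReal (μ := x i) (v := Real.toNNReal (σ ^ 2)) 2).sub
      (memLp_const (x i))
    exact MemLp.integrable_sq this
  exact this.lintegral_lt_top

lemma est_memLp (N : ℕ) (σ : ℝ) (est : (Fin N → ℝ) → Fin N → ℝ) (hm : Measurable est)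
    (x : Fin N → ℝ) (h : MSE N σ est x < ⊤) (k : Fin N) :
    MemLp (fun y => est y k - x k) 2 (gaussP N σ x) := by
  have hmk : ∀ i, Measurable fun y => est y i := fun i => (measurable_pi_apply i).comp hm
  rw [memLp_two_iff_integrable_sq ((hmk k).sub_const _).aestronglyMeasurable]
  refine ⟨(((hmk k).sub_const _).pow_const 2).aestronglyMeasurable, ?_⟩
  rw [hasFiniteIntegral_iff_ofReal (Eventually.of_forall fun y => sq_nonneg _)]
  refine lt_of_le_of_lt (lintegral_mono fun y => ENNReal.ofReal_le_ofReal ?_) h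
  exact Finset.single_le_sum (f := fun i => (est y i - x i) ^ 2) (fun i _ => sq_nonneg _)
    (Finset.mem_univ k)

lemma quad (D C Q : ℝ) (h : ∀ t : ℝ, D ≤ D + 2 * t * C + t ^ 2 * Q) (hQ : 0 ≤ Q) : C = 0 := by
  have := h (- C / (Q + 1))
  have h1 : (0 : ℝ) < Q + 1 := by linarith
  have e : D + 2 * (- C / (Q + 1)) * C + (- C / (Q + 1)) ^ 2 * Q
      = D - C ^ 2 * (Q + 2) / (Q + 1) ^ 2 := by field_simp; ring
  rw [e] at this
  have h3 : C ^ 2 * (Q + 2) / (Q + 1) ^ 2 ≤ 0 := by linarith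
  by_contra hC
  have : 0 < C ^ 2 * (Q + 2) / (Q + 1) ^ 2 := by positivity
  linarith

lemma orth (N S : ℕ) (σ : ℝ) (est : (Fin N → ℝ) → Fin N → ℝ) (hm : Measurable est)
    (hu : Unbiased N S σ est)
    (hopt : ∀ e : (Fin N → ℝ) → Fin N → ℝ, Measurable e → Unbiased N S σ e →
          ∀ x ∈ sparseSet N S, MSE N σ est x ≤ MSE N σ e x)
    (U : (Fin N → ℝ) → ℝ) (hUm : Measurable U) (hU2 : ∀ x, MemLp U 2 (gaussP N σ x))
    (hU0 : ∀ x ∈ sparseSet N S, ∫ y, U y ∂gaussP N σ x = 0)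
    (x : Fin N → ℝ) (hx : x ∈ sparseSet N S) (k : Fin N) :
    ∫ y, U y * est y k ∂gaussP N σ x = 0 := by
  have hfin : MSE N σ est x < ⊤ :=
    (hopt _ measurable_id (id_unbiased N S σ) x hx).trans_lt (id_MSE N σ x)
  have hL := est_memLp N σ est hm x hfin
  have hUi : ∀ x, Integrable U (gaussP N σ x) := fun x => (hU2 x).integrable (by norm_num)
  have hI1 : Integrable (fun y => ∑ i, (est y i - x i) ^ 2) (gaussP N σ x) :=
    integrable_finsetSum _ fun i _ => (hL i).integrable_sq
  have hI2 : Integrable (fun y => U y * (est y k - x k)) (gaussP N σ x) :=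
    (hU2 x).integrable_mul (hL k)
  have hI3 : Integrable (fun y => U y ^ 2) (gaussP N σ x) := (hU2 x).integrable_sq
  have key : ∫ y, U y * (est y k - x k) ∂gaussP N σ x = 0 := by
    refine quad (∫ y, ∑ i, (est y i - x i) ^ 2 ∂gaussP N σ x) _ (∫ y, U y ^ 2 ∂gaussP N σ x) ?_
      (integral_nonneg fun y => sq_nonneg _)
    intro t
    set e : (Fin N → ℝ) → Fin N → ℝ := fun y i => est y i + (if i = k then t * U y else 0) with he
    have hem : Measurable e := by
      refine measurable_pi_lambda _ fun i => ?_
      refine ((measurable_pi_apply i).comp hm).add ?_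
      by_cases hik : i = k
      · simpa [hik] using hUm.const_mul t
      · simp [hik]
    have heu : Unbiased N S σ e := by
      intro z hz i
      obtain ⟨h1, h2⟩ := hu z hz i
      by_cases hik : i = k
      · have : (fun y => e y i) = fun y => est y i + t * U y := by simp [he, hik]
        simp only [this]
        refine ⟨h1.add ((hUi z).const_mul t), ?_⟩
        rw [integral_add h1 ((hUi z).const_mul t), integral_const_mul, hU0 z hz, h2]; simp
      · have : (fun y => e y i) = fun y => est y i := by simp [he, hik]
        simp only [this]
        exact ⟨h1, h2⟩
    have hle := hopt e hem heu x hx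
    have heq : ∀ y, ∑ i, (e y i - x i) ^ 2 =
        ∑ i, (est y i - x i) ^ 2 + 2 * t * (U y * (est y k - x k)) + t ^ 2 * U y ^ 2 := by
      intro y
      have : ∀ i, (e y i - x i) ^ 2 = (est y i - x i) ^ 2 +
          if i = k then 2 * t * (U y * (est y k - x k)) + t ^ 2 * U y ^ 2 else 0 := by
        intro i
        by_cases hik : i = k
        · subst hik; simp [he]; ring
        · simp [he, hik]
      simp_rw [this, Finset.sum_add_distrib]
      simp [add_assoc]
    unfold MSE at hle
    simp_rw [heq] at hle
    have hI4 : Integrable (fun y => ∑ i, (est y i - x i) ^ 2 + 2 * t * (U y * (est y k - x k))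
        + t ^ 2 * U y ^ 2) (gaussP N σ x) := (hI1.add (hI2.const_mul (2 * t))).add (hI3.const_mul (t ^ 2))
    rw [← ofReal_integral_eq_lintegral_ofReal hI1
        (Eventually.of_forall fun y => Finset.sum_nonneg fun i _ => sq_nonneg _),
      ← ofReal_integral_eq_lintegral_ofReal hI4
        (Eventually.of_forall fun y => by
          have := heq y
          simp only [Pi.zero_apply]
          rw [← this]
          exact Finset.sum_nonneg fun i _ => sq_nonneg _)] at hle
    have h5 : ∫ y, ((∑ i, (est y i - x i) ^ 2) + 2 * t * (U y * (est y k - x k)) + t ^ 2 * U y ^ 2)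
        ∂gaussP N σ x = (∫ y, ∑ i, (est y i - x i) ^ 2 ∂gaussP N σ x) +
          2 * t * (∫ y, U y * (est y k - x k) ∂gaussP N σ x)
          + t ^ 2 * (∫ y, U y ^ 2 ∂gaussP N σ x) := by
      have hI5 : Integrable (fun y => ∑ i, (est y i - x i) ^ 2 + 2 * t * (U y * (est y k - x k)))
        (gaussP N σ x) := hI1.add (hI2.const_mul (2 * t))
      rw [integral_add hI5 (hI3.const_mul (t ^ 2)),
        integral_add hI1 (hI2.const_mul (2 * t)), integral_const_mul, integral_const_mul]
    have h6 := (ENNReal.ofReal_le_ofReal_iff' ).1 hle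
    rcases h6 with h6 | h6
    · rw [← h5]; exact h6
    · have h7 : 0 ≤ ∫ y, ((∑ i, (est y i - x i) ^ 2) + 2 * t * (U y * (est y k - x k))
          + t ^ 2 * U y ^ 2) ∂gaussP N σ x :=
        integral_nonneg fun y => by
          simp only [Pi.zero_apply]; rw [← heq y]
          exact Finset.sum_nonneg fun i _ => sq_nonneg _
      rw [← h5]; exact h6.trans h7
  have h8 : ∀ y, U y * est y k = U y * (est y k - x k) + x k * U y := fun y => by ring
  simp_rw [h8]
  rw [integral_add hI2 ((hUi x).const_mul _), key, integral_const_mul, hU0 x hx]; simp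

/-- For `S < N` there is no uniformly minimum variance unbiased (UMVU) estimator. -/
theorem stmt_2 (N S : ℕ) (σ : ℝ) (hσ : 0 < σ) (hS : 1 ≤ S) (hSN : S < N) :
    ¬ ∃ estStar : (Fin N → ℝ) → Fin N → ℝ,
        Measurable estStar ∧ Unbiased N S σ estStar ∧
        ∀ est : (Fin N → ℝ) → Fin N → ℝ, Measurable est → Unbiased N S σ est →
          ∀ x ∈ sparseSet N S, MSE N σ estStar x ≤ MSE N σ est x := by
  rintro ⟨est, hm, hu, hopt⟩
  obtain ⟨T, -, hT⟩ := Finset.exists_subset_card_eq (s := (Finset.univ : Finset (Fin N)))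
    (n := S + 1) (by simpa using hSN)
  have hTne : 1 < T.card := by omega
  obtain ⟨k, hk⟩ : T.Nonempty := Finset.card_pos.1 (by omega)
  have hsp : ∀ z : Fin N → ℝ, ∀ A : Finset (Fin N), A.card ≤ S → (∀ i, i ∉ A → z i = 0) →
      z ∈ sparseSet N S := by
    intro z A hA hz
    have : supp z ⊆ A := by
      intro i hi
      by_contra hc
      simp [supp, hz i hc] at hi
    exact (Finset.card_le_card this).trans hA
  have hL : ∀ x ∈ sparseSet N S, MemLp (fun y => est y k) 2 (gaussP N σ x) := by
    intro x hx
    have := (est_memLp N σ est hm x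
      ((hopt _ measurable_id (id_unbiased N S σ) x hx).trans_lt (id_MSE N σ x)) k).add
      (memLp_const (x k))
    refine this.ae_eq (Eventually.of_forall fun y => ?_)
    simp
  have main : ∀ (a x : Fin N → ℝ), x ∈ sparseSet N S →
      ∑ A ∈ T.powerset, (∏ _i ∈ T \ A, (-1 : ℝ)) * ((∏ i ∈ A, Real.exp (a i * x i)) *
        ∫ y, est y k ∂gaussP N σ (fun i => x i + σ ^ 2 * rs a A i)) = 0 := by
    intro a x hx
    rw [← UU_integral N σ hσ T x a _ (hL x hx)]
    exact orth N S σ est hm hu hopt _ (UU_meas N σ T a) (fun x => UU_memLp N σ hσ T x a)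
      (fun x hx => UU_mean N S σ hσ T (by omega) x a hx) x hx k
  obtain ⟨j, hj⟩ : (T.erase k).Nonempty := Finset.card_pos.1 (by
    rw [Finset.card_erase_of_mem hk]; omega)
  -- unbiasedness on all vectors supported in `T`
  have step1 : ∀ z : Fin N → ℝ, (∀ i, i ∉ T → z i = 0) →
      ∫ y, est y k ∂gaussP N σ z = z k := by
    intro z hz
    have hσ2 : σ ^ 2 ≠ 0 := by positivity
    have h := main (fun i => z i / σ ^ 2) 0 (hsp 0 ∅ (by simp) (by simp))
    have h0 := comb2 T k hk (fun _ => 1)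
    rw [Finset.prod_eq_zero hj (by simp), mul_zero] at h0
    have hTm : T ∈ T.powerset := by simp
    rw [← Finset.add_sum_erase _ _ hTm] at h h0
    have hz' : (fun i => (0 : Fin N → ℝ) i + σ ^ 2 * rs (fun i => z i / σ ^ 2) T i) = z := by
      ext i
      by_cases hi : i ∈ T
      · simp [rs, hi]; field_simp
      · simp [rs, hi, hz i hi]
    rw [hz'] at h
    have hrest : ∑ A ∈ T.powerset.erase T, (∏ _i ∈ T \ A, (-1 : ℝ)) *
        ((∏ i ∈ A, Real.exp (z i / σ ^ 2 * (0 : Fin N → ℝ) i)) *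
        ∫ y, est y k ∂gaussP N σ (fun i => (0 : Fin N → ℝ) i +
          σ ^ 2 * rs (fun i => z i / σ ^ 2) A i)) =
        z k * ∑ A ∈ T.powerset.erase T, (∏ _i ∈ T \ A, (-1 : ℝ)) *
          ((∏ _i ∈ A, (1 : ℝ)) * (if k ∈ A then 1 else 0)) := by
      rw [Finset.mul_sum]
      refine Finset.sum_congr rfl fun A hA => ?_
      rw [Finset.mem_erase, Finset.mem_powerset] at hA
      have hc := Finset.card_lt_card (Finset.ssubset_iff_subset_ne.2 ⟨hA.2, hA.1⟩)
      rw [(hu _ (hsp _ A (by omega) (fun i hi => by simp [rs, hi])) k).2]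
      by_cases hkA : k ∈ A
      · simp [rs, hkA]; field_simp
      · simp [rs, hkA]
    rw [hrest] at h
    simp [hk] at h h0
    rw [h0] at h
    linarith
  -- contradiction
  have h := main (fun _ => 1) (rs (fun _ => 1) (T.erase k))
    (hsp _ (T.erase k) (by rw [Finset.card_erase_of_mem hk]; omega)
      (fun i hi => by simp only [rs, if_neg hi]))
  have h2 : ∑ A ∈ T.powerset, (∏ _i ∈ T \ A, (-1 : ℝ)) *
      ((∏ i ∈ A, Real.exp (1 * rs (fun _ => 1) (T.erase k) i)) *
        ∫ y, est y k ∂gaussP N σ (fun i => rs (fun _ => 1) (T.erase k) i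
          + σ ^ 2 * rs (fun _ => 1) A i)) =
      σ ^ 2 * ∑ A ∈ T.powerset, (∏ _i ∈ T \ A, (-1 : ℝ)) *
      ((∏ i ∈ A, Real.exp (1 * rs (fun _ => 1) (T.erase k) i)) * (if k ∈ A then 1 else 0)) := by
    rw [Finset.mul_sum]
    refine Finset.sum_congr rfl fun A hA => ?_
    rw [Finset.mem_powerset] at hA
    rw [step1 _ (fun i hi => by
      have : i ∉ A := fun h => hi (hA h)
      simp [rs, hi, this])]
    simp only [rs, Finset.mem_erase, ne_eq, not_true_eq_false, false_and, if_false]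
    split_ifs <;> ring
  rw [h2, comb2 T k hk] at h
  have hpos : 0 < ∏ i ∈ T.erase k, (Real.exp (1 * rs (fun _ => 1) (T.erase k) i) - 1) := by
    refine Finset.prod_pos fun i hi => ?_
    simp only [rs, if_pos hi, mul_one]
    have := Real.add_one_lt_exp (one_ne_zero (α := ℝ))
    linarith
  have := mul_pos (by positivity : (0 : ℝ) < σ ^ 2) (mul_pos (Real.exp_pos
    (1 * rs (fun _ => 1) (T.erase k) k)) hpos)
  linarith
end

section
/- Suppose 1 ≤ S < N and let x₀ ∈ X_S with ‖x₀‖₀ < S. Then every measurable unbiased estimator x̂ whose components are square-integrable with respect to P_{x₀} satisfies ε(x₀; x̂) ≥ N σ². -/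
open MeasureTheory ProbabilityTheory Filter
open scoped ENNReal Classical

noncomputable def LR (σ m t : ℝ) (y : ℝ) : ℝ := Real.exp ((t * (y - m) - t ^ 2 / 2) / σ ^ 2)

lemma LR_meas (σ m t : ℝ) : Measurable (LR σ m t) := by
  unfold LR; fun_prop

lemma LR_nonneg (σ m t y : ℝ) : 0 ≤ LR σ m t y := (Real.exp_pos _).le

lemma gauss1 (σ m t : ℝ) (hσ : 0 < σ) :
    gaussianReal (m + t) (Real.toNNReal (σ ^ 2)) =
      (gaussianReal m (Real.toNNReal (σ ^ 2))).withDensity (fun y => ENNReal.ofReal (LR σ m t y)) := by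
  have h2 : 0 < σ ^ 2 := by positivity
  have hv : Real.toNNReal (σ ^ 2) ≠ 0 := by simpa using hσ.ne'
  rw [gaussianReal_of_var_ne_zero _ hv, gaussianReal_of_var_ne_zero _ hv,
    ← withDensity_mul _ (measurable_gaussianPDF _ _) (LR_meas σ m t).ennreal_ofReal]
  congr 1
  ext y
  simp only [Pi.mul_apply, gaussianPDF]
  rw [← ENNReal.ofReal_mul (gaussianPDFReal_nonneg _ _ _)]
  congr 1
  simp only [gaussianPDFReal, LR, Real.coe_toNNReal _ h2.le]
  rw [mul_assoc (√(2 * Real.pi * σ ^ 2))⁻¹, ← Real.exp_add]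
  congr 2
  field_simp
  ring

lemma gaussP_shift (N : ℕ) (σ : ℝ) (hσ : 0 < σ) (x : Fin N → ℝ) (i : Fin N) (t : ℝ) :
    gaussP N σ (Function.update x i (x i + t)) =
      (gaussP N σ x).withDensity (fun y => ENNReal.ofReal (LR σ (x i) t (y i))) := by
  unfold gaussP
  apply Measure.pi_eq
  intro s hs
  set μ : Fin N → Measure ℝ := fun j => gaussianReal (x j) (Real.toNNReal (σ ^ 2)) with hμ
  let F : Fin N → ℝ → ℝ≥0∞ := fun j => (s j).indicator
    (fun y => if j = i then ENNReal.ofReal (LR σ (x i) t y) else 1)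
  have hF : ∀ j, Measurable (F j) := by
    intro j
    refine Measurable.indicator ?_ (hs j)
    by_cases h : j = i
    · simpa [h] using (LR_meas σ (x i) t).ennreal_ofReal
    · simp [h]
  rw [withDensity_apply _ (MeasurableSet.univ_pi hs), ← lintegral_indicator (MeasurableSet.univ_pi hs)]
  have e1 : ∀ y : Fin N → ℝ, (Set.univ.pi s).indicator
      (fun y => ENNReal.ofReal (LR σ (x i) t (y i))) y = ∏ j, F j (y j) := by
    intro y
    by_cases hy : y ∈ Set.univ.pi s
    · rw [Set.indicator_of_mem hy]
      have : ∀ j, F j (y j) = if j = i then ENNReal.ofReal (LR σ (x i) t (y j)) else 1 := by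
        intro j
        exact Set.indicator_of_mem (hy j (Set.mem_univ j)) _
      simp [this]
    · rw [Set.indicator_of_notMem hy]
      simp only [Set.mem_pi, Set.mem_univ, true_implies, not_forall] at hy
      obtain ⟨j, hj⟩ := hy
      symm
      apply Finset.prod_eq_zero (Finset.mem_univ j)
      exact Set.indicator_of_notMem hj _
  simp_rw [e1]
  have hind : iIndepFun (fun j (y : Fin N → ℝ) => F j (y j)) (Measure.pi μ) :=
    iIndepFun_pi (μ := μ) (X := F) (fun j => (hF j).aemeasurable)
  rw [lintegral_prod_eq_prod_lintegral_of_indepFun Finset.univ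
    (fun j (y : Fin N → ℝ) => F j (y j)) hind (fun j => (hF j).comp (measurable_pi_apply j))]
  refine Finset.prod_congr rfl fun j _ => ?_
  rw [(measurePreserving_eval μ j).lintegral_comp (hF j)]
  rw [lintegral_indicator (hs j)]
  by_cases h : j = i
  · subst h
    simp only [Function.update_self, if_true]
    rw [gauss1 σ (x j) t hσ, withDensity_apply _ (hs j)]
  · simp [h, hμ]

instance gaussP_prob (N : ℕ) (σ : ℝ) (x : Fin N → ℝ) : IsProbabilityMeasure (gaussP N σ x) := by
  unfold gaussP; infer_instance

lemma int_shift (N : ℕ) (σ : ℝ) (hσ : 0 < σ) (x : Fin N → ℝ) (i : Fin N) (t : ℝ)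
    (f : (Fin N → ℝ) → ℝ) :
    ∫ y, f y ∂(gaussP N σ (Function.update x i (x i + t))) =
      ∫ y, LR σ (x i) t (y i) * f y ∂(gaussP N σ x) := by
  rw [gaussP_shift N σ hσ, integral_withDensity_eq_integral_toReal_smul]
  · refine integral_congr_ae (ae_of_all _ fun y => ?_)
    simp only [smul_eq_mul]
    rw [ENNReal.toReal_ofReal (LR_nonneg _ _ _ _)]
  · exact ((LR_meas σ (x i) t).comp (measurable_pi_apply i)).ennreal_ofReal
  · exact ae_of_all _ fun y => ENNReal.ofReal_lt_top

lemma integ_shift (N : ℕ) (σ : ℝ) (hσ : 0 < σ) (x : Fin N → ℝ) (i : Fin N) (t : ℝ)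
    (f : (Fin N → ℝ) → ℝ)
    (hf : Integrable f (gaussP N σ (Function.update x i (x i + t)))) :
    Integrable (fun y => LR σ (x i) t (y i) * f y) (gaussP N σ x) := by
  rw [gaussP_shift N σ hσ, integrable_withDensity_iff_integrable_smul'] at hf
  · refine hf.congr (ae_of_all _ fun y => ?_)
    simp only [smul_eq_mul]
    rw [ENNReal.toReal_ofReal (LR_nonneg _ _ _ _)]
  · exact ((LR_meas σ (x i) t).comp (measurable_pi_apply i)).ennreal_ofReal
  · exact ae_of_all _ fun y => ENNReal.ofReal_lt_top

lemma LR_sq (σ m t y : ℝ) (hσ : 0 < σ) :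
    LR σ m t y ^ 2 = Real.exp (t ^ 2 / σ ^ 2) * LR σ m (2 * t) y := by
  unfold LR
  rw [← Real.exp_nat_mul, ← Real.exp_add]
  congr 1
  field_simp
  push_cast
  ring

lemma key (N : ℕ) (σ : ℝ) (hσ : 0 < σ) (x : Fin N → ℝ) (i : Fin N)
    (f : (Fin N → ℝ) → ℝ) (hfm : Measurable f)
    (h1 : ∀ t, Integrable f (gaussP N σ (Function.update x i (x i + t))) ∧
      ∫ y, f y ∂(gaussP N σ (Function.update x i (x i + t))) = x i + t)
    (hsq : Integrable (fun y => f y ^ 2) (gaussP N σ x)) :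
    Integrable (fun y => (f y - x i) ^ 2) (gaussP N σ x) ∧
    σ ^ 2 ≤ ∫ y, (f y - x i) ^ 2 ∂(gaussP N σ x) := by
  have hf0 : Integrable f (gaussP N σ x) := by simpa using (h1 0).1
  have hf0' : ∫ y, f y ∂(gaussP N σ x) = x i := by simpa using (h1 0).2
  have hg2 : Integrable (fun y => (f y - x i) ^ 2) (gaussP N σ x) := by
    have := (hsq.sub (hf0.const_mul (2 * x i))).add (integrable_const (x i ^ 2))
    refine this.congr (ae_of_all _ fun y => ?_)
    simp only [Pi.add_apply, Pi.sub_apply]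
    ring
  refine ⟨hg2, ?_⟩
  set V := ∫ y, (f y - x i) ^ 2 ∂(gaussP N σ x) with hV
  have hL1 : ∀ t, Integrable (fun y : Fin N → ℝ => LR σ (x i) t (y i)) (gaussP N σ x) := by
    intro t
    simpa using integ_shift N σ hσ x i t (fun _ => 1) (integrable_const _)
  have hL1' : ∀ t, ∫ y, LR σ (x i) t (y i) ∂(gaussP N σ x) = 1 := by
    intro t
    simpa using (int_shift N σ hσ x i t (fun _ => 1)).symm
  have main : ∀ t c : ℝ, 0 ≤ V - 2 * c * t + c ^ 2 * (Real.exp (t ^ 2 / σ ^ 2) - 1) := by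
    intro t c
    have hLf := integ_shift N σ hσ x i t f (h1 t).1
    have hLf' := (int_shift N σ hσ x i t f).symm.trans (h1 t).2
    have e : ∀ y : Fin N → ℝ, (f y - x i - c * (LR σ (x i) t (y i) - 1)) ^ 2 =
        (f y - x i) ^ 2 - 2 * c * (LR σ (x i) t (y i) * f y) + 2 * c * f y
          + (2 * c * x i - 2 * c ^ 2) * LR σ (x i) t (y i)
          + c ^ 2 * Real.exp (t ^ 2 / σ ^ 2) * LR σ (x i) (2 * t) (y i)
          + (c ^ 2 - 2 * c * x i) := by
      intro y
      have := LR_sq σ (x i) t (y i) hσ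
      linear_combination c ^ 2 * this
    have h0 : 0 ≤ ∫ y, (f y - x i - c * (LR σ (x i) t (y i) - 1)) ^ 2 ∂(gaussP N σ x) :=
      integral_nonneg fun y => sq_nonneg _
    simp_rw [e] at h0
    have i1 := hLf.const_mul (2 * c)
    have i2 := hf0.const_mul (2 * c)
    have i3 := (hL1 t).const_mul (2 * c * x i - 2 * c ^ 2)
    have i4 := (hL1 (2 * t)).const_mul (c ^ 2 * Real.exp (t ^ 2 / σ ^ 2))
    rw [integral_add (by fun_prop) (by fun_prop), integral_add (by fun_prop) i4,
      integral_add (by fun_prop) i3, integral_add (by fun_prop) i2, integral_sub hg2 i1] at h0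
    simp only [integral_const_mul, hLf', hf0', hL1', integral_const, probReal_univ, one_smul] at h0
    rw [← hV] at h0
    linarith
  have hb : ∀ s : ℝ, 0 < s → s ≤ 1 → σ ^ 2 - σ ^ 2 * s ^ 2 ≤ V := by
    intro s hs hs1
    have m := main (σ * s) (σ / s)
    have e1 : (σ * s) ^ 2 / σ ^ 2 = s ^ 2 := by field_simp
    rw [e1] at m
    have hs2 : |s ^ 2| ≤ 1 := by rw [abs_of_nonneg (by positivity)]; nlinarith
    have b := (abs_le.1 (Real.abs_exp_sub_one_sub_id_le hs2)).2
    have b2 : (σ / s) ^ 2 * (Real.exp (s ^ 2) - 1) ≤ (σ / s) ^ 2 * (s ^ 2 + (s ^ 2) ^ 2) :=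
      mul_le_mul_of_nonneg_left (by linarith) (by positivity)
    have e2 : (σ / s) ^ 2 * (s ^ 2 + (s ^ 2) ^ 2) = σ ^ 2 + σ ^ 2 * s ^ 2 := by field_simp
    have e3 : 2 * (σ / s) * (σ * s) = 2 * σ ^ 2 := by field_simp
    linarith
  by_contra hlt
  push Not at hlt
  have hV0 : 0 ≤ V := integral_nonneg fun y => sq_nonneg _
  set d := (σ ^ 2 - V) / (2 * σ ^ 2) with hd
  have hdp : 0 < d := div_pos (by linarith) (by positivity)
  have hd1 : d ≤ 1 := by
    rw [hd, div_le_one (by positivity)]; nlinarith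
  have := hb d hdp hd1
  have e : σ ^ 2 * d = (σ ^ 2 - V) / 2 := by rw [hd]; field_simp
  have : σ ^ 2 * d ^ 2 ≤ σ ^ 2 * d := mul_le_mul_of_nonneg_left (by nlinarith) (by positivity)
  linarith

/-- Lower bound for `‖x₀‖₀ < S`: `ε(x₀; x̂) ≥ N σ²`. -/
theorem stmt_4 (N S : ℕ) (σ : ℝ) (hσ : 0 < σ) (hS : 1 ≤ S) (hSN : S < N)
    (x₀ : Fin N → ℝ) (hcard : (supp x₀).card < S)
    (est : (Fin N → ℝ) → Fin N → ℝ) (hmeas : Measurable est)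
    (hunb : Unbiased N S σ est)
    (hsq : ∀ i, Integrable (fun y => (est y i) ^ 2) (gaussP N σ x₀)) :
    ENNReal.ofReal ((N : ℝ) * σ ^ 2) ≤ MSE N σ est x₀ := by
  have hk : ∀ i, Integrable (fun y => (est y i - x₀ i) ^ 2) (gaussP N σ x₀) ∧
      σ ^ 2 ≤ ∫ y, (est y i - x₀ i) ^ 2 ∂(gaussP N σ x₀) := by
    intro i
    refine key N σ hσ x₀ i (fun y => est y i) ((measurable_pi_apply i).comp hmeas) ?_ (hsq i)
    intro t
    have hm : Function.update x₀ i (x₀ i + t) ∈ sparseSet N S := by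
      show (supp _).card ≤ S
      have hsub : supp (Function.update x₀ i (x₀ i + t)) ⊆ insert i (supp x₀) := by
        intro j hj
        by_cases h : j = i
        · simp [h]
        · simpa [supp, h] using hj
      have := Finset.card_le_card hsub
      have := Finset.card_insert_le i (supp x₀)
      omega
    have := hunb _ hm i
    simpa using this
  unfold MSE
  rw [← ofReal_integral_eq_lintegral_ofReal (integrable_finsetSum _ fun i _ => (hk i).1)
    (ae_of_all _ fun y => Finset.sum_nonneg fun i _ => sq_nonneg _),
    integral_finsetSum _ fun i _ => (hk i).1]
  apply ENNReal.ofReal_le_ofReal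
  calc (N : ℝ) * σ ^ 2 = ∑ _i : Fin N, σ ^ 2 := by simp
    _ ≤ _ := Finset.sum_le_sum fun i _ => (hk i).2
end

section
/- Suppose 1 ≤ S < N and let x₀ ∈ X_S with ‖x₀‖₀ = S. Then the estimator x̂_c (defined componentwise by (x̂_c(y))_k = y_k for k ∈ supp(x₀) and (x̂_c(y))_k = y_k · (1 − ∏_{l ∈ supp(x₀)} tanh(y_l x₀_l / σ²)) for k ∉ supp(x₀)) is unbiased: for every x ∈ X_S and every index k, the function y ↦ (x̂_c(y))_k is P_x-integrable and ∫ (x̂_c(y))_k dP_x(y) = x_k. -/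
open MeasureTheory ProbabilityTheory Filter
open scoped ENNReal Classical

/-- The constrained estimator `x̂_c`: identity on `supp(x₀)`, and
`y_k (1 − ∏_{l ∈ supp(x₀)} tanh(y_l x₀_l/σ²))` off the support. -/
noncomputable def estC (N : ℕ) (σ : ℝ) (x₀ : Fin N → ℝ) (y : Fin N → ℝ) (k : Fin N) : ℝ :=
  if k ∈ supp x₀ then y k
  else y k * (1 - ∏ l ∈ supp x₀, Real.tanh (y l * x₀ l / σ ^ 2))

theorem tanhS_meas (c d : ℝ) : Measurable (fun t : ℝ => Real.tanh (t * c / d)) := by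
  simp_rw [Real.tanh_eq_sinh_div_cosh]
  have h1 : Measurable (fun t : ℝ => Real.sinh (t * c / d)) :=
    Real.measurable_sinh.comp (by fun_prop)
  have h2 : Measurable (fun t : ℝ => Real.cosh (t * c / d)) :=
    Real.measurable_cosh.comp (by fun_prop)
  exact h1.div h2

theorem tanhS_zero (c d : ℝ) (v : NNReal) :
    ∫ t, Real.tanh (t * c / d) ∂(gaussianReal 0 v) = 0 := by
  have hm : (gaussianReal 0 v).map (fun x ↦ -x) = gaussianReal 0 v := by
    rw [gaussianReal_map_neg, neg_zero]
  have h : ∫ t, Real.tanh (t * c / d) ∂(gaussianReal 0 v)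
      = ∫ t, Real.tanh (-t * c / d) ∂(gaussianReal 0 v) := by
    conv_lhs => rw [← hm]
    exact integral_map (by fun_prop) (tanhS_meas c d).aestronglyMeasurable
  have h2 : ∀ t : ℝ, Real.tanh (-t * c / d) = - Real.tanh (t * c / d) := by
    intro t
    rw [← Real.tanh_neg]; congr 1; ring
  simp_rw [h2] at h
  rw [integral_neg] at h
  linarith

/-- The constrained estimator `x̂_c` is unbiased. -/
theorem stmt_6 (N S : ℕ) (σ : ℝ) (hσ : 0 < σ) (hS : 1 ≤ S) (hSN : S < N)
    (x₀ : Fin N → ℝ) (hcard : (supp x₀).card = S) :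
    Unbiased N S σ (estC N σ x₀) := by
  intro x hx k
  have hx' : (supp x).card ≤ S := hx
  have hid : ∀ m : ℝ, Integrable (fun t : ℝ => t) (gaussianReal m (Real.toNNReal (σ ^ 2))) :=
    fun m => (memLp_id_gaussianReal (μ := m) (v := Real.toNNReal (σ ^ 2)) 1).integrable (by simp)
  have hI : Integrable (fun y : Fin N → ℝ => y k) (gaussP N σ x) :=
    integrable_comp_eval (μ := fun i => gaussianReal (x i) (Real.toNNReal (σ ^ 2)))
      (i := k) (f := fun t : ℝ => t) (hid (x k))
  have hE : ∫ y, y k ∂(gaussP N σ x) = x k := by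
    have := integral_comp_eval (μ := fun i => gaussianReal (x i) (Real.toNNReal (σ ^ 2)))
      (i := k) (f := fun t : ℝ => t) (by fun_prop)
    rw [integral_id_gaussianReal] at this
    exact this
  by_cases hk : k ∈ supp x₀
  · simp only [estC, hk, if_true]
    exact ⟨hI, hE⟩
  simp only [estC, hk, if_false]
  let f : Fin N → ℝ → ℝ := fun i t =>
    if i = k then t else if i ∈ supp x₀ then Real.tanh (t * x₀ i / σ ^ 2) else 1
  have hf : ∀ y : Fin N → ℝ,
      y k * ∏ l ∈ supp x₀, Real.tanh (y l * x₀ l / σ ^ 2) = ∏ i, f i (y i) := by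
    intro y
    rw [← Finset.mul_prod_erase Finset.univ _ (Finset.mem_univ k)]
    congr 1
    · simp [f]
    · rw [← Finset.prod_subset (s₁ := supp x₀) (s₂ := Finset.univ.erase k)
        (f := fun i => f i (y i))]
      · refine Finset.prod_congr rfl fun i hi => ?_
        have : i ≠ k := fun h => hk (h ▸ hi)
        simp [f, this, hi]
      · intro i hi
        have : i ≠ k := fun h => hk (h ▸ hi)
        simp [this]
      · intro i hi hi'
        have : i ≠ k := Finset.ne_of_mem_erase hi
        simp [f, this, hi']
  have hfi : ∀ i, Integrable (f i) (gaussianReal (x i) (Real.toNNReal (σ ^ 2))) := by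
    intro i
    by_cases h1 : i = k
    · simpa [f, h1] using hid (x k)
    by_cases h2 : i ∈ supp x₀
    · simp only [f, h1, h2, if_true, if_false]
      refine Integrable.of_bound (tanhS_meas _ _).aestronglyMeasurable 1
        (Eventually.of_forall fun t => ?_)
      exact (Real.abs_tanh_lt_one _).le
    · simp [f, h1, h2]
  have hJ : Integrable (fun y : Fin N → ℝ => ∏ i, f i (y i)) (gaussP N σ x) :=
    Integrable.fintype_prod hfi
  have hZ : ∫ y, ∏ i, f i (y i) ∂(gaussP N σ x) = 0 := by
    unfold gaussP
    rw [integral_fintype_prod_eq_prod]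
    by_cases hxk : x k = 0
    · refine Finset.prod_eq_zero (Finset.mem_univ k) ?_
      simp [f, hxk]
    · obtain ⟨l, hl, hl0⟩ : ∃ l ∈ supp x₀, x l = 0 := by
        by_contra! hcon
        have hsub : insert k (supp x₀) ⊆ supp x := by
          intro i hi
          rcases Finset.mem_insert.mp hi with rfl | hi
          · simp [supp, hxk]
          · simp [supp, hcon i hi]
        have := Finset.card_le_card hsub
        rw [Finset.card_insert_of_notMem hk] at this
        omega
      refine Finset.prod_eq_zero (Finset.mem_univ l) ?_
      have : l ≠ k := fun h => hk (h ▸ hl)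
      simp only [f, this, hl, if_true, if_false, hl0]
      exact tanhS_zero _ _ _
  simp_rw [mul_sub, mul_one, hf]
  refine ⟨hI.sub hJ, ?_⟩
  rw [integral_sub hI hJ, hZ, hE, sub_zero]
end

section
/- Let x₀ ∈ X_S and let k be an index with x₀_k ≠ 0. Then among measurable component estimators f : ℝ^N → ℝ that are unbiased for the k-th component (for every x ∈ X_S, f is P_x-integrable with ∫ f(y) dP_x(y) = x_k) and square-integrable with respect to P_{x₀}, the minimum of the componentwise MSE ∫ (f(y) − x₀_k)² dP_{x₀}(y) equals σ²: every such f satisfies ∫ (f(y) − x₀_k)² dP_{x₀}(y) ≥ σ², and the choice f(y) = y_k satisfies the unbiasedness constraint and attains the value σ². -/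
open MeasureTheory ProbabilityTheory Filter
open scoped ENNReal Classical

lemma MeasureTheory.Integrable.fsub {α : Type*} [MeasurableSpace α] {μ : Measure α} {f g : α → ℝ}
    (hf : Integrable f μ) (hg : Integrable g μ) : Integrable (fun y => f y - g y) μ :=
  hf.sub hg

lemma aux_gauss1 (m t : ℝ) (v : NNReal) (hv : v ≠ 0) :
    gaussianReal (m + t) v = (gaussianReal m v).withDensity
      (fun z => ENNReal.ofReal (Real.exp ((t / v) * z + (-(t * m + t ^ 2 / 2) / v)))) := by
  have hv' : (v : ℝ) ≠ 0 := by exact_mod_cast hv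
  rw [gaussianReal_of_var_ne_zero _ hv, gaussianReal_of_var_ne_zero _ hv,
    ← withDensity_mul _ (measurable_gaussianPDF _ _) (by fun_prop)]
  congr 1
  ext z
  simp only [Pi.mul_apply, gaussianPDF]
  rw [← ENNReal.ofReal_mul (gaussianPDFReal_nonneg _ _ _)]
  congr 1
  simp only [gaussianPDFReal]
  rw [mul_assoc _ (Real.exp _) (Real.exp _), ← Real.exp_add]
  congr 2
  field_simp
  ring

lemma aux_expint (m a b : ℝ) (v : NNReal) :
    Integrable (fun z => Real.exp (a * z + b)) (gaussianReal m v) ∧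
    ∫ z, Real.exp (a * z + b) ∂gaussianReal m v = Real.exp (m * a + v * a ^ 2 / 2 + b) := by
  simp_rw [Real.exp_add _ b]
  refine ⟨(integrable_exp_mul_gaussianReal a).mul_const _, ?_⟩
  rw [integral_mul_const]
  have := congrFun (mgf_fun_id_gaussianReal (μ := m) (v := v)) a
  simp only [mgf] at this
  rw [this]

lemma aux_pi {N : ℕ} (μ : Fin N → Measure ℝ) [∀ i, IsProbabilityMeasure (μ i)] (k : Fin N)
    (ρ : ℝ → ℝ≥0∞) (hρ : Measurable ρ) (ν : Fin N → Measure ℝ)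
    [∀ i, IsProbabilityMeasure (ν i)]
    (hk : ν k = (μ k).withDensity ρ) (hne : ∀ i, i ≠ k → ν i = μ i) :
    Measure.pi ν = (Measure.pi μ).withDensity (fun y => ρ (y k)) := by
  apply Measure.pi_eq
  intro s hs
  rw [withDensity_apply _ (MeasurableSet.univ_pi hs), Measure.restrict_pi_pi]
  have h1 : ∫⁻ y, ρ (y k) ∂(Measure.pi fun i => (μ i).restrict (s i))
      = ∫⁻ z, ρ z ∂((Measure.pi fun i => (μ i).restrict (s i)).map (Function.eval k)) := by
    rw [lintegral_map hρ (measurable_pi_apply k)]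
  rw [h1, Measure.pi_map_eval, lintegral_smul_measure, ← withDensity_apply _ (hs k), ← hk,
    ← Finset.mul_prod_erase Finset.univ _ (Finset.mem_univ k), mul_comm, smul_eq_mul, mul_comm, mul_comm]
  congr 1
  apply Finset.prod_congr rfl
  intro i hi
  rw [hne i (Finset.ne_of_mem_erase hi)]
  simp

/-- For `k ∈ supp(x₀)`, the minimum componentwise MSE over component estimators unbiased
for the `k`-th component and square-integrable w.r.t. `P_{x₀}` equals `σ²`, attained
by `f(y) = y_k`. -/
theorem stmt_10 (N S : ℕ) (σ : ℝ) (hσ : 0 < σ) (hS : 1 ≤ S) (hSN : S ≤ N)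
    (x₀ : Fin N → ℝ) (hx₀ : x₀ ∈ sparseSet N S) (k : Fin N) (hk : x₀ k ≠ 0) :
    (∀ f : (Fin N → ℝ) → ℝ, Measurable f →
        (∀ x ∈ sparseSet N S,
          Integrable f (gaussP N σ x) ∧ (∫ y, f y ∂gaussP N σ x) = x k) →
        Integrable (fun y => (f y) ^ 2) (gaussP N σ x₀) →
        σ ^ 2 ≤ ∫ y, (f y - x₀ k) ^ 2 ∂gaussP N σ x₀) ∧
    (∀ x ∈ sparseSet N S,
      Integrable (fun y => y k) (gaussP N σ x) ∧ (∫ y, y k ∂gaussP N σ x) = x k) ∧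
    (∫ y, (y k - x₀ k) ^ 2 ∂gaussP N σ x₀) = σ ^ 2 := by
  have hv : Real.toNNReal (σ ^ 2) ≠ 0 := by
    have : 0 < Real.toNNReal (σ ^ 2) := Real.toNNReal_pos.2 (by positivity)
    exact this.ne'
  have hvr : ((Real.toNNReal (σ ^ 2) : NNReal) : ℝ) = σ ^ 2 := Real.coe_toNNReal _ (by positivity)
  refine ⟨?_, ?_, ?_⟩
  · intro f hf hub hsq
    have : IsProbabilityMeasure (gaussP N σ x₀) := by unfold gaussP; infer_instance
    have key : ∀ t : ℝ, 0 < t → t ≤ σ →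
        σ ^ 2 - t ^ 2 ≤ ∫ y, (f y - x₀ k) ^ 2 ∂gaussP N σ x₀ := by
      intro t ht htσ
      set a : ℝ := t / σ ^ 2 with ha
      set b : ℝ := -(t * x₀ k + t ^ 2 / 2) / σ ^ 2 with hb
      set L : (Fin N → ℝ) → ℝ := fun y => Real.exp (a * y k + b) with hL
      have hLm : Measurable L := by fun_prop
      have hev : ∀ a b : ℝ, Integrable (fun y : Fin N → ℝ => Real.exp (a * y k + b)) (gaussP N σ x₀) ∧
          ∫ y, Real.exp (a * y k + b) ∂gaussP N σ x₀
            = Real.exp (x₀ k * a + σ ^ 2 * a ^ 2 / 2 + b) := by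
        intro a b
        have h := aux_expint (x₀ k) a b (Real.toNNReal (σ ^ 2))
        rw [hvr] at h
        unfold gaussP
        refine ⟨integrable_comp_eval (μ := fun i => gaussianReal (x₀ i) (Real.toNNReal (σ ^ 2))) (i := k)
          (f := fun z => Real.exp (a * z + b)) h.1, ?_⟩
        rw [← h.2]
        exact integral_comp_eval (μ := fun i => gaussianReal (x₀ i) (Real.toNNReal (σ ^ 2))) (i := k)
          (f := fun z => Real.exp (a * z + b)) h.1.aestronglyMeasurable
      have hL1 : Integrable L (gaussP N σ x₀) := (hev a b).1
      have hL1' : ∫ y, L y ∂gaussP N σ x₀ = 1 := by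
        rw [hL, (hev a b).2, Real.exp_eq_one_iff, ha, hb]
        field_simp
        ring
      have hLsq : ∀ y, L y ^ 2 = Real.exp ((2 * a) * y k + 2 * b) := by
        intro y
        simp only [hL]
        rw [← Real.exp_nat_mul]
        congr 1
        push_cast
        ring
      have hL2 : Integrable (fun y => L y ^ 2) (gaussP N σ x₀) := by
        simp_rw [hLsq]
        exact (hev _ _).1
      have hL2' : ∫ y, L y ^ 2 ∂gaussP N σ x₀ = Real.exp (t ^ 2 / σ ^ 2) := by
        simp_rw [hLsq]
        rw [(hev _ _).2]
        congr 1
        rw [ha, hb]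
        field_simp
        ring
      set xt : Fin N → ℝ := Function.update x₀ k (x₀ k + t) with hxt
      have hxtS : xt ∈ sparseSet N S := by
        refine le_trans (Finset.card_le_card ?_) hx₀
        intro i hi
        simp only [supp, Finset.mem_filter, Finset.mem_univ, true_and] at hi ⊢
        by_cases hik : i = k
        · rw [hik]; exact hk
        · rwa [hxt, Function.update_of_ne hik] at hi
      have hmeas : gaussP N σ xt = (gaussP N σ x₀).withDensity
          (fun y => ENNReal.ofReal (L y)) := by
        unfold gaussP
        refine aux_pi (fun i => gaussianReal (x₀ i) (Real.toNNReal (σ ^ 2))) k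
          (fun z => ENNReal.ofReal (Real.exp (a * z + b))) (by fun_prop) _ ?_ ?_
        · simp only [hxt, Function.update_self]
          rw [aux_gauss1 _ _ _ hv, hvr]
        · intro i hi
          simp only [hxt, Function.update_of_ne hi]
      have hft := hub xt hxtS
      have hf0 := hub x₀ hx₀
      rw [hmeas] at hft
      have hLnn : ∀ y, 0 ≤ L y := fun y => (Real.exp_pos _).le
      have hfL : Integrable (fun y => f y * L y) (gaussP N σ x₀) := by
        have := (integrable_withDensity_iff hLm.ennreal_ofReal (by simp)).1 hft.1
        simpa [ENNReal.toReal_ofReal (hLnn _)] using this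
      have hfL' : ∫ y, f y * L y ∂gaussP N σ x₀ = x₀ k + t := by
        have h2 := hft.2
        rw [integral_withDensity_eq_integral_toReal_smul hLm.ennreal_ofReal (by simp)] at h2
        simp only [ENNReal.toReal_ofReal (hLnn _), smul_eq_mul, hxt, Function.update_self] at h2
        rw [← h2]
        congr 1
        ext y
        ring
      have hg2 : Integrable (fun y => (f y - x₀ k) ^ 2) (gaussP N σ x₀) := by
        have : (fun y => (f y - x₀ k) ^ 2)
            = fun y => f y ^ 2 - 2 * x₀ k * f y + x₀ k ^ 2 := by ext y; ring
        rw [this]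
        exact (hsq.sub (hf0.1.const_mul _)).add (integrable_const _)
      set c : ℝ := σ ^ 2 / t with hc
      have hint : Integrable (fun y => f y * L y - f y - x₀ k * L y + x₀ k) (gaussP N σ x₀) :=
        ((hfL.fsub hf0.1).fsub (hL1.const_mul _)).add (integrable_const _)
      have hint' : ∫ y, (f y * L y - f y - x₀ k * L y + x₀ k) ∂gaussP N σ x₀ = t := by
        rw [integral_add ((hfL.fsub hf0.1).fsub (hL1.const_mul _)) (integrable_const _),
          integral_sub (hfL.fsub hf0.1) (hL1.const_mul _), integral_sub hfL hf0.1,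
          integral_const_mul, hL1', hfL', hf0.2]
        simp
      have hV : Integrable (fun y => L y ^ 2 - 2 * L y + 1) (gaussP N σ x₀) :=
        (hL2.fsub (hL1.const_mul _)).add (integrable_const _)
      have hV' : ∫ y, (L y ^ 2 - 2 * L y + 1) ∂gaussP N σ x₀ = Real.exp (t ^ 2 / σ ^ 2) - 1 := by
        rw [integral_add (hL2.fsub (hL1.const_mul _)) (integrable_const _),
          integral_sub hL2 (hL1.const_mul _), integral_const_mul, hL1', hL2']
        simp
        ring
      have hpos : 0 ≤ ∫ y, ((f y - x₀ k) - c * (L y - 1)) ^ 2 ∂gaussP N σ x₀ :=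
        integral_nonneg fun y => sq_nonneg _
      have hexp : ∫ y, ((f y - x₀ k) - c * (L y - 1)) ^ 2 ∂gaussP N σ x₀
          = ∫ y, (f y - x₀ k) ^ 2 ∂gaussP N σ x₀ - 2 * c * t
            + c ^ 2 * (Real.exp (t ^ 2 / σ ^ 2) - 1) := by
        have : (fun y => ((f y - x₀ k) - c * (L y - 1)) ^ 2)
            = fun y => (f y - x₀ k) ^ 2 - 2 * c * (f y * L y - f y - x₀ k * L y + x₀ k)
              + c ^ 2 * (L y ^ 2 - 2 * L y + 1) := by ext y; ring
        rw [this, integral_add (hg2.fsub (hint.const_mul _)) (hV.const_mul _),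
          integral_sub hg2 (hint.const_mul _), integral_const_mul, integral_const_mul, hint', hV']
      rw [hexp] at hpos
      have hs1 : t ^ 2 / σ ^ 2 ≤ 1 := by
        rw [div_le_one (by positivity)]
        gcongr
      have hs0 : 0 ≤ t ^ 2 / σ ^ 2 := by positivity
      have hb1 := Real.norm_exp_sub_one_sub_id_le (x := t ^ 2 / σ ^ 2)
        (by rw [Real.norm_eq_abs, abs_of_nonneg hs0]; exact hs1)
      rw [Real.norm_eq_abs, Real.norm_eq_abs, abs_of_nonneg hs0] at hb1
      have hb2 := (abs_le.1 hb1).2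
      have hb3 : c ^ 2 * (Real.exp (t ^ 2 / σ ^ 2) - 1)
          ≤ c ^ 2 * (t ^ 2 / σ ^ 2 + (t ^ 2 / σ ^ 2) ^ 2) := by
        gcongr
        linarith
      have hb4 : c ^ 2 * (t ^ 2 / σ ^ 2 + (t ^ 2 / σ ^ 2) ^ 2) = σ ^ 2 + t ^ 2 := by
        rw [hc]; field_simp
      have hb5 : 2 * c * t = 2 * σ ^ 2 := by
        rw [hc]; field_simp
      linarith
    refine le_of_forall_pos_le_add fun ε hε => ?_
    have hm : 0 < min σ (Real.sqrt ε) := lt_min hσ (Real.sqrt_pos.2 hε)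
    have h1 := key _ hm (min_le_left _ _)
    have h2 : (min σ (Real.sqrt ε)) ^ 2 ≤ ε := by
      calc (min σ (Real.sqrt ε)) ^ 2 ≤ (Real.sqrt ε) ^ 2 := by
            gcongr
            exact min_le_right _ _
        _ = ε := Real.sq_sqrt hε.le
    linarith
  · intro x _
    have h : Integrable (fun z : ℝ => z) (gaussianReal (x k) (Real.toNNReal (σ ^ 2))) :=
      (memLp_id_gaussianReal 1).integrable (by simp)
    unfold gaussP
    refine ⟨integrable_comp_eval (μ := fun i => gaussianReal (x i) (Real.toNNReal (σ ^ 2)))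
      (i := k) (f := fun z => z) h, ?_⟩
    refine (integral_comp_eval (μ := fun i => gaussianReal (x i) (Real.toNNReal (σ ^ 2)))
      (i := k) (f := fun z => z) h.aestronglyMeasurable).trans integral_id_gaussianReal
  · unfold gaussP
    refine (integral_comp_eval (μ := fun i => gaussianReal (x₀ i) (Real.toNNReal (σ ^ 2)))
      (i := k) (f := fun z => (z - x₀ k) ^ 2) (by fun_prop)).trans ?_
    have h := variance_fun_id_gaussianReal (μ := x₀ k) (v := Real.toNNReal (σ ^ 2))
    rw [variance_eq_integral (by fun_prop), integral_id_gaussianReal, hvr] at h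
    exact h
end
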